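/- Let n ≥ 2, let {X_i}_{i=1}^{n²−1} and {Y_i}_{i=1}^{n²−1} be bases of the real vector space of traceless Hermitian n×n matrices that are orthonormal with respect to the Hilbert–Schmidt inner product ⟨A,B⟩ = Tr(A†B), let μ be a nonzero real number, and set τ = (1/n) I ⊗ I + μ ∑_{i=1}^{n²−1} X_i ⊗ Y_i, a matrix on ℂ^n ⊗ ℂ^n. Then the linear map Ψ_{B→A}^τ : E ↦ Tr_B[(I_A ⊗ E) τ], from n×n complex matrices to n×n complex matrices, is bijective. -/

import Mathlib

open Matrix
open scoped Kronecker ComplexOrder BigOperators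

noncomputable section

/-- A density matrix: positive semidefinite with trace 1. -/
def IsDensity {d : Type*} [Fintype d] [DecidableEq d] (ρ : Matrix d d ℂ) : Prop :=
  ρ.PosSemidef ∧ ρ.trace = 1

/-- Partial trace over the second (B) factor. -/
def trB {m n : ℕ} (ρ : Matrix (Fin m × Fin n) (Fin m × Fin n) ℂ) :
    Matrix (Fin m) (Fin m) ℂ := fun i j => ∑ k, ρ (i, k) (j, k)

/-- Partial trace over the first (A) factor. -/
def trA {m n : ℕ} (ρ : Matrix (Fin m × Fin n) (Fin m × Fin n) ℂ) :
    Matrix (Fin n) (Fin n) ℂ := fun k l => ∑ i, ρ (i, k) (i, l)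

/-- The set of states remotely preparable on Alice's side. -/
def LambdaA {m n : ℕ} (ρ : Matrix (Fin m × Fin n) (Fin m × Fin n) ℂ) :
    Set (Matrix (Fin m) (Fin m) ℂ) :=
  {σ | IsDensity σ ∧ ∃ E : Matrix (Fin n) (Fin n) ℂ, E.PosSemidef ∧
    σ = trB (((1 : Matrix (Fin m) (Fin m) ℂ) ⊗ₖ E) * ρ)}

/-- The set of states remotely preparable on Bob's side. -/
def LambdaB {m n : ℕ} (ρ : Matrix (Fin m × Fin n) (Fin m × Fin n) ℂ) :
    Set (Matrix (Fin n) (Fin n) ℂ) :=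
  {σ | IsDensity σ ∧ ∃ E : Matrix (Fin m) (Fin m) ℂ, E.PosSemidef ∧
    σ = trA ((E ⊗ₖ (1 : Matrix (Fin n) (Fin n) ℂ)) * ρ)}

/-- A preparation-and-measurement noncontextual model for a set `K` of density matrices. -/
def HasNCModel {d : ℕ} (K : Set (Matrix (Fin d) (Fin d) ℂ)) : Prop :=
  ∃ (L : ℕ) (N ω : Fin L → Matrix (Fin d) (Fin d) ℂ),
    (∀ l, (N l).IsHermitian) ∧ (∀ l, IsDensity (ω l)) ∧
    (∀ ρ ∈ K, ∀ l, 0 ≤ (ρ * N l).trace) ∧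
    (∀ ρ ∈ K, ∑ l, (ρ * N l).trace = 1) ∧
    (∀ ρ ∈ K, ∀ M : Matrix (Fin d) (Fin d) ℂ, M.PosSemidef → (1 - M).PosSemidef →
      (ρ * M).trace = ∑ l, (ρ * N l).trace * (ω l * M).trace)

/-- Separability of a bipartite density matrix. -/
def Separable {m n : ℕ} (ρ : Matrix (Fin m × Fin n) (Fin m × Fin n) ℂ) : Prop :=
  ∃ (L : ℕ) (ω : Fin L → Matrix (Fin m) (Fin m) ℂ)
    (κ : Fin L → Matrix (Fin n) (Fin n) ℂ),
    (∀ l, IsDensity (ω l)) ∧ (∀ l, (κ l).PosSemidef) ∧ ρ = ∑ l, ω l ⊗ₖ κ l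

def robustMap {n m : ℕ} (X Y : Fin m → Matrix (Fin n) (Fin n) ℂ) (μ : ℂ) :
    Matrix (Fin n) (Fin n) ℂ →ₗ[ℂ] Matrix (Fin n) (Fin n) ℂ where
  toFun E := ((n : ℂ)⁻¹ * E.trace) • (1 : Matrix (Fin n) (Fin n) ℂ) +
    μ • ∑ i, (E * Y i).trace • X i
  map_add' E F := by
    simp only [Matrix.trace_add, mul_add, add_mul, add_smul, Finset.sum_add_distrib, smul_add]
    abel
  map_smul' c E := by
    simp only [Matrix.trace_smul, Matrix.smul_mul, smul_eq_mul, RingHom.id_apply, smul_add,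
      Finset.smul_sum, smul_smul]
    congr 1
    · congr 1; ring
    · refine Finset.sum_congr rfl fun i _ => ?_
      congr 1; ring

theorem trB_add' {n : ℕ} (ρ σ : Matrix (Fin n × Fin n) (Fin n × Fin n) ℂ) :
    trB (ρ + σ) = trB ρ + trB σ := by
  ext i j; simp [trB, Finset.sum_add_distrib]

theorem trB_smul' {n : ℕ} (c : ℂ) (ρ : Matrix (Fin n × Fin n) (Fin n × Fin n) ℂ) :
    trB (c • ρ) = c • trB ρ := by
  ext i j; simp [trB, Finset.mul_sum]

theorem trB_sum' {n m : ℕ} (ρ : Fin m → Matrix (Fin n × Fin n) (Fin n × Fin n) ℂ) :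
    trB (∑ i, ρ i) = ∑ i, trB (ρ i) := by
  ext i j
  simp only [trB, Matrix.sum_apply]
  exact Finset.sum_comm

theorem trB_kron' {n : ℕ} (A B : Matrix (Fin n) (Fin n) ℂ) :
    trB (A ⊗ₖ B) = B.trace • A := by
  ext i j
  simp [trB, Matrix.trace, ← Finset.mul_sum, mul_comm]

theorem robustifying_state_invertible {n : ℕ} (hn : 2 ≤ n)
    (X Y : Fin (n ^ 2 - 1) → Matrix (Fin n) (Fin n) ℂ)
    (hXherm : ∀ i, (X i).IsHermitian) (hXtr : ∀ i, (X i).trace = 0)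
    (hYherm : ∀ i, (Y i).IsHermitian) (hYtr : ∀ i, (Y i).trace = 0)
    (hXon : ∀ i j, ((X i)ᴴ * X j).trace = if i = j then 1 else 0)
    (hYon : ∀ i j, ((Y i)ᴴ * Y j).trace = if i = j then 1 else 0)
    (hXspan : ∀ H : Matrix (Fin n) (Fin n) ℂ, H.IsHermitian → H.trace = 0 →
      H ∈ Submodule.span ℝ (Set.range X))
    (hYspan : ∀ H : Matrix (Fin n) (Fin n) ℂ, H.IsHermitian → H.trace = 0 →
      H ∈ Submodule.span ℝ (Set.range Y))
    (μ : ℝ) (hμ : μ ≠ 0) :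
    Function.Bijective (fun E : Matrix (Fin n) (Fin n) ℂ =>
      trB (((1 : Matrix (Fin n) (Fin n) ℂ) ⊗ₖ E) *
        ((n : ℂ)⁻¹ • ((1 : Matrix (Fin n) (Fin n) ℂ) ⊗ₖ (1 : Matrix (Fin n) (Fin n) ℂ)) +
          (μ : ℂ) • ∑ i, X i ⊗ₖ Y i))) := by
  have hn0 : (n : ℂ) ≠ 0 := by
    have : n ≠ 0 := by omega
    exact_mod_cast this
  have hμ' : (μ : ℂ) ≠ 0 := by exact_mod_cast hμ
  have hf : (fun E : Matrix (Fin n) (Fin n) ℂ =>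
      trB (((1 : Matrix (Fin n) (Fin n) ℂ) ⊗ₖ E) *
        ((n : ℂ)⁻¹ • ((1 : Matrix (Fin n) (Fin n) ℂ) ⊗ₖ (1 : Matrix (Fin n) (Fin n) ℂ)) +
          (μ : ℂ) • ∑ i, X i ⊗ₖ Y i))) = robustMap X Y (μ : ℂ) := by
    funext E
    simp only [mul_add, Matrix.mul_smul, Finset.mul_sum, ← Matrix.mul_kronecker_mul, one_mul,
      mul_one, trB_add', trB_smul', trB_sum', trB_kron', smul_smul]
    rfl
  rw [hf]
  have hone : (1 : Matrix (Fin n) (Fin n) ℂ) ∈ LinearMap.range (robustMap X Y (μ : ℂ)) := by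
    refine ⟨1, ?_⟩
    change ((n : ℂ)⁻¹ * (1 : Matrix (Fin n) (Fin n) ℂ).trace) • (1 : Matrix (Fin n) (Fin n) ℂ) +
      (μ : ℂ) • ∑ i, ((1 : Matrix (Fin n) (Fin n) ℂ) * Y i).trace • X i = 1
    simp [hYtr, hn0]
  have hX : ∀ j, X j ∈ LinearMap.range (robustMap X Y (μ : ℂ)) := by
    intro j
    refine ⟨(μ : ℂ)⁻¹ • Y j, ?_⟩
    rw [map_smul]
    change (μ : ℂ)⁻¹ • (((n : ℂ)⁻¹ * (Y j).trace) • (1 : Matrix (Fin n) (Fin n) ℂ) +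
      (μ : ℂ) • ∑ i, (Y j * Y i).trace • X i) = X j
    have h : ∀ i, (Y j * Y i).trace = if j = i then 1 else 0 := by
      intro i
      rw [← hYon j i, (hYherm j).eq]
    have h5 : ∑ i, (Y j * Y i).trace • X i = X j := by simp [h]
    rw [h5, hYtr, mul_zero, zero_smul, zero_add, smul_smul, inv_mul_cancel₀ hμ', one_smul]
  have hH0 : ∀ H : Matrix (Fin n) (Fin n) ℂ, H.IsHermitian → H.trace = 0 →
      H ∈ LinearMap.range (robustMap X Y (μ : ℂ)) := by
    intro H h1 h2
    have hle : Submodule.span ℝ (Set.range X) ≤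
        (LinearMap.range (robustMap X Y (μ : ℂ))).restrictScalars ℝ := by
      rw [Submodule.span_le]
      rintro _ ⟨j, rfl⟩
      exact hX j
    exact hle (hXspan H h1 h2)
  have hH : ∀ H : Matrix (Fin n) (Fin n) ℂ, H.IsHermitian →
      H ∈ LinearMap.range (robustMap X Y (μ : ℂ)) := by
    intro H h1
    have hst : star H.trace = H.trace := by
      rw [← Matrix.trace_conjTranspose, h1.eq]
    have h2 := hH0 (H - ((n : ℂ)⁻¹ * H.trace) • 1) (by
      unfold Matrix.IsHermitian
      rw [Matrix.conjTranspose_sub, Matrix.conjTranspose_smul, star_mul, hst, h1.eq]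
      simp [mul_comm]) (by
      simp [Matrix.trace_sub, Matrix.trace_smul]
      field_simp
      simp)
    have h3 := Submodule.add_mem _ h2 (Submodule.smul_mem _ ((n : ℂ)⁻¹ * H.trace) hone)
    simpa using h3
  have hsurj : Function.Surjective (robustMap X Y (μ : ℂ)) := by
    intro M
    have h1 := hH (M + Mᴴ) (by
      unfold Matrix.IsHermitian
      simp [add_comm])
    have h2 := hH (Complex.I • (M - Mᴴ)) (by
      unfold Matrix.IsHermitian
      rw [Matrix.conjTranspose_smul]
      simp [smul_sub]
      abel)
    have h3 := Submodule.smul_mem _ (1 / 2 : ℂ) (Submodule.sub_mem _ h1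
      (Submodule.smul_mem _ Complex.I h2))
    have h4 : (1 / 2 : ℂ) • ((M + Mᴴ) - Complex.I • (Complex.I • (M - Mᴴ))) = M := by
      rw [smul_smul, Complex.I_mul_I]
      ext i j
      simp
      ring
    rw [h4] at h3
    exact h3
  exact ⟨LinearMap.injective_iff_surjective.mpr hsurj, hsurj⟩
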